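/- Under two-stage weighted cluster sampling with second-stage sample size m, the variance of the estimator μ̂_{w,m} = (1/n) Σ_{k=1}^n μ̂_{I_k} equals Var(μ̂_{w,m}) = (1/(nM)) · ( Σ_{i=1}^N M_i (μ_i − μ(G))² + (1/m) · Σ_{i : M_i > m} ((M_i − m)/(M_i − 1)) · M_i · μ_i (1 − μ_i) ). -/

import Mathlib

/-- The entity cluster with subject id `i`: the set of triples assigned to cluster `i`
by the cluster assignment `cl`. -/
def cluster {M N : ℕ} (cl : Fin M → Fin N) (i : Fin N) : Finset (Fin M) :=
  Finset.univ.filter (fun t => cl t = i)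

/-- `Msize cl i` is the size `Mᵢ` of the `i`-th entity cluster. -/
def Msize {M N : ℕ} (cl : Fin M → Fin N) (i : Fin N) : ℕ := (cluster cl i).card

/-- The possible second-stage samples from cluster `i`: all subsets of cluster `i` of
size `min (Msize cl i) m`, drawn uniformly at random without replacement. -/
def secondStage {M N : ℕ} (cl : Fin M → Fin N) (m : ℕ) (i : Fin N) :
    Finset (Finset (Fin M)) :=
  (cluster cl i).powersetCard (min (Msize cl i) m)

/-- Expectation of a statistic `g` of the two-stage weighted cluster sample.  An
outcome consists of the first-stage cluster indices `I : Fin n → Fin N` (drawn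
independently with probabilities `P(I k = i) = Msize cl i / M`) together with, for each
draw `k`, a second-stage sample `S k` drawn uniformly among the subsets of cluster
`I k` of size `min (Msize cl (I k)) m`, independently across draws. -/
noncomputable def twcsExpect {M N : ℕ} (n m : ℕ) (cl : Fin M → Fin N)
    (g : (I : Fin n → Fin N) →
      ((k : Fin n) → k ∈ (Finset.univ : Finset (Fin n)) → Finset (Fin M)) → ℝ) : ℝ :=
  ∑ I : Fin n → Fin N,
    ∑ S ∈ Finset.pi Finset.univ (fun k => secondStage cl m (I k)),
      (∏ k : Fin n,
        ((Msize cl (I k) : ℝ) / (M : ℝ)) * (1 / ((secondStage cl m (I k)).card : ℝ)))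
        * g I S

/-- The TWCS estimator `μ̂_{w,m} = (1/n) ∑ k μ̂_{I k}`, where `μ̂_{I k}` is the mean
correctness label of the triples drawn from the `k`-th sampled cluster. -/
noncomputable def twcsEstimator {M N : ℕ} (n : ℕ) (f : Fin M → ℝ)
    (_I : Fin n → Fin N)
    (S : (k : Fin n) → k ∈ (Finset.univ : Finset (Fin n)) → Finset (Fin M)) : ℝ :=
  (1 / (n : ℝ)) * ∑ k : Fin n,
    (∑ t ∈ S k (Finset.mem_univ k), f t) / ((S k (Finset.mem_univ k)).card : ℝ)

/-- The accuracy `μ i = τ i / M i` of cluster `i` (the fraction of its triples that are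
correct). -/
noncomputable def clusterAccuracy {M N : ℕ} (cl : Fin M → Fin N) (f : Fin M → ℝ)
    (i : Fin N) : ℝ :=
  (∑ t ∈ cluster cl i, f t) / (Msize cl i : ℝ)

/-!
Draws are independent and identically distributed, so the variance of the estimator is `1 / n`
times that of the sample mean of a single draw. Conditioning on the drawn cluster splits the latter
into the variance of the cluster means and the mean of the within-cluster sampling variances.

The sampling variance without replacement comes from exchangeability: a uniform `(r + 1)`-subset
of `C` with a uniform element `t` of it is the same as a uniform `t` in `C` with a uniform
`r`-subset of `C.erase t`. For centred values `g` the average over `C.erase t` is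
`-g t / (#C - 1)`, and this negative correlation produces the finite-population factor
`(#C - r) / (#C - 1)` of samples of size `r`.
-/

open Finset
open scoped BigOperators

section SamplingWithoutReplacement

variable {α : Type*}

theorem sum_powersetCard_succ_sum_erase {E : Type*} [AddCommMonoid E] [DecidableEq α]
    (C : Finset α) (r : ℕ) (F : α → Finset α → E) :
    ∑ s ∈ C.powersetCard (r + 1), ∑ t ∈ s, F t (s.erase t) =
      ∑ t ∈ C, ∑ s ∈ (C.erase t).powersetCard r, F t s := by
  rw [sum_sigma', sum_sigma']
  refine sum_bij' (fun x _ ↦ ⟨x.2, x.1.erase x.2⟩) (fun x _ ↦ ⟨insert x.1 x.2, x.1⟩)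
    ?_ ?_ ?_ ?_ fun _ _ ↦ rfl
  · rintro ⟨s, t⟩ hst
    obtain ⟨⟨hsC, hcard⟩, hts⟩ := by simpa only [mem_sigma, mem_powersetCard] using hst
    simp only [mem_sigma, mem_powersetCard]
    exact ⟨hsC hts, erase_subset_erase t hsC, by rw [card_erase_of_mem hts, hcard]; rfl⟩
  · rintro ⟨t, s⟩ hts
    obtain ⟨htC, hsC, hcard⟩ := by simpa only [mem_sigma, mem_powersetCard] using hts
    have ht : t ∉ s := fun h ↦ notMem_erase t C (hsC h)
    simp only [mem_sigma, mem_powersetCard]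
    exact ⟨⟨insert_subset htC (hsC.trans (erase_subset t C)), by
      rw [card_insert_of_notMem ht, hcard]⟩, mem_insert_self t s⟩
  · rintro ⟨s, t⟩ hst
    simp only [insert_erase (mem_sigma.1 hst).2]
  · rintro ⟨t, s⟩ hts
    have ht : t ∉ s := fun h ↦
      notMem_erase t C ((mem_powersetCard.1 (mem_sigma.1 hts).2).1 h)
    simp only [erase_insert ht]

theorem expect_powersetCard_succ_expect_erase {E : Type*} [AddCommMonoid E] [Module ℚ≥0 E]
    [DecidableEq α] (C : Finset α) (r : ℕ) (F : α → Finset α → E) :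
    𝔼 s ∈ C.powersetCard (r + 1), 𝔼 t ∈ s, F t (s.erase t) =
      𝔼 t ∈ C, 𝔼 s ∈ (C.erase t).powersetCard r, F t s := by
  have inner_left : ∀ s ∈ C.powersetCard (r + 1),
      𝔼 t ∈ s, F t (s.erase t) = ((r + 1 : ℕ) : ℚ≥0)⁻¹ • ∑ t ∈ s, F t (s.erase t) :=
    fun s hs ↦ by rw [expect, (mem_powersetCard.1 hs).2]
  have inner_right : ∀ t ∈ C, 𝔼 s ∈ (C.erase t).powersetCard r, F t s =
      (((#C - 1).choose r : ℕ) : ℚ≥0)⁻¹ • ∑ s ∈ (C.erase t).powersetCard r, F t s :=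
    fun t ht ↦ by rw [expect, card_powersetCard, card_erase_of_mem ht]
  have choose_identity : (#C).choose (r + 1) * (r + 1) = #C * (#C - 1).choose r := by
    cases #C with
    | zero => simp
    | succ k => exact (Nat.add_one_mul_choose_eq k r).symm
  rw [expect_congr rfl inner_left, expect_congr rfl inner_right, ← smul_expect, ← smul_expect,
    expect, expect, sum_powersetCard_succ_sum_erase, card_powersetCard, smul_smul, smul_smul,
    ← mul_inv, ← mul_inv, ← Nat.cast_mul, ← Nat.cast_mul, mul_comm (r + 1), choose_identity,
    mul_comm (#C)]

variable {𝕜 : Type*} [Field 𝕜] [CharZero 𝕜] {C : Finset α} {r : ℕ}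

theorem expect_powersetCard_sum (hr : r ≤ #C) (f : α → 𝕜) :
    𝔼 s ∈ C.powersetCard r, ∑ t ∈ s, f t = r * 𝔼 t ∈ C, f t := by
  classical
  obtain _ | r := r
  · simp
  have sum_eq : ∀ s ∈ C.powersetCard (r + 1), ∑ t ∈ s, f t = ((r + 1 : ℕ) : 𝕜) * 𝔼 t ∈ s, f t :=
    fun s hs ↦ by rw [← card_smul_expect, (mem_powersetCard.1 hs).2, nsmul_eq_mul]
  rw [expect_congr rfl sum_eq, ← mul_expect,
    expect_powersetCard_succ_expect_erase C r (fun t _ ↦ f t)]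
  congr 1
  refine expect_congr rfl fun t ht ↦ expect_const ?_ (f t)
  rw [powersetCard_nonempty, card_erase_of_mem ht]
  exact Nat.le_sub_one_of_lt hr

theorem expect_powersetCard_expect (hr₀ : r ≠ 0) (hr : r ≤ #C) (f : α → 𝕜) :
    𝔼 s ∈ C.powersetCard r, 𝔼 t ∈ s, f t = 𝔼 t ∈ C, f t := by
  have expect_eq : ∀ s ∈ C.powersetCard r, 𝔼 t ∈ s, f t = (∑ t ∈ s, f t) / (r : 𝕜) :=
    fun s hs ↦ by rw [expect_eq_sum_div_card, (mem_powersetCard.1 hs).2]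
  rw [expect_congr rfl expect_eq, ← expect_div, expect_powersetCard_sum hr,
    mul_div_cancel_left₀ _ (Nat.cast_ne_zero.2 hr₀)]

theorem expect_erase_of_expect_eq_zero [DecidableEq α] {g : α → 𝕜} (hg : 𝔼 t ∈ C, g t = 0)
    {t : α} (ht : t ∈ C) : 𝔼 u ∈ C.erase t, g u = -g t / (#C - 1) := by
  have sum_eq_zero : ∑ u ∈ C, g u = 0 := by rw [← card_smul_expect, hg, smul_zero]
  rw [expect_eq_sum_div_card, sum_erase_eq_sub ht, sum_eq_zero, zero_sub, card_erase_of_mem ht,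
    Nat.cast_pred (card_pos.2 ⟨t, ht⟩)]

theorem expect_powersetCard_sq_expect_of_expect_eq_zero (hr₀ : r ≠ 0) (hr : r ≤ #C)
    (hC : 1 < #C) {g : α → 𝕜} (hg : 𝔼 t ∈ C, g t = 0) :
    𝔼 s ∈ C.powersetCard r, (𝔼 t ∈ s, g t) ^ 2 =
      (#C - r) / (#C - 1) * (𝔼 t ∈ C, g t ^ 2) / r := by
  classical
  obtain ⟨r, rfl⟩ := Nat.exists_eq_succ_of_ne_zero hr₀
  have hr' : ((r + 1 : ℕ) : 𝕜) ≠ 0 := Nat.cast_ne_zero.2 hr₀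
  have hC' : (#C : 𝕜) - 1 ≠ 0 := sub_ne_zero.2 (Nat.cast_ne_one.2 hC.ne')
  have sq_eq : ∀ s ∈ C.powersetCard (r + 1), (𝔼 t ∈ s, g t) ^ 2 =
      𝔼 t ∈ s, g t * ((g t + ∑ u ∈ s.erase t, g u) / (r + 1 : ℕ)) := by
    intro s hs
    rw [sq, expect_mul]
    refine expect_congr rfl fun t ht ↦ ?_
    rw [add_sum_erase s g ht, expect_eq_sum_div_card, (mem_powersetCard.1 hs).2]
  have remaining_draws : ∀ t ∈ C,
      𝔼 s ∈ (C.erase t).powersetCard r, g t * ((g t + ∑ u ∈ s, g u) / (r + 1 : ℕ)) =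
        (#C - (r + 1 : ℕ)) / (#C - 1) * g t ^ 2 / (r + 1 : ℕ) := by
    intro t ht
    have hr_erase : r ≤ #(C.erase t) := by
      rw [card_erase_of_mem ht]
      exact Nat.le_sub_one_of_lt hr
    rw [← mul_expect, ← expect_div, expect_add_distrib,
      expect_const (powersetCard_nonempty.2 hr_erase), expect_powersetCard_sum hr_erase,
      expect_erase_of_expect_eq_zero hg ht]
    field_simp
    push_cast
    ring
  rw [expect_congr rfl sq_eq, expect_powersetCard_succ_expect_erase C r
    (fun t s ↦ g t * ((g t + ∑ u ∈ s, g u) / (r + 1 : ℕ))), expect_congr rfl remaining_draws,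
    ← expect_div, ← mul_expect]

/-- The variance of `f` under the uniform distribution on the finite population `C`, normalised by
`#C` rather than `#C - 1`; it is `0` when `C` is empty. -/
def populationVariance (C : Finset α) (f : α → 𝕜) : 𝕜 :=
  𝔼 t ∈ C, (f t - 𝔼 u ∈ C, f u) ^ 2

theorem expect_sub_const_sq (hC : C.Nonempty) (f : α → 𝕜) (c : 𝕜) :
    𝔼 t ∈ C, (f t - c) ^ 2 = populationVariance C f + (𝔼 t ∈ C, f t - c) ^ 2 := by
  set μ := 𝔼 t ∈ C, f t with hμ
  have expand : ∀ t ∈ C,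
      (f t - c) ^ 2 = (f t - μ) ^ 2 + (2 * (μ - c) * (f t - μ) + (μ - c) ^ 2) := fun t _ ↦ by ring
  rw [expect_congr rfl expand, expect_add_distrib, expect_add_distrib, ← mul_expect,
    expect_sub_distrib, expect_const hC, expect_const hC, ← hμ, sub_self, mul_zero, zero_add,
    populationVariance]

theorem populationVariance_of_eq_zero_or_one {f : α → 𝕜} (hf : ∀ t ∈ C, f t = 0 ∨ f t = 1) :
    populationVariance C f = (𝔼 t ∈ C, f t) * (1 - 𝔼 t ∈ C, f t) := by
  obtain rfl | hC := C.eq_empty_or_nonempty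
  · simp [populationVariance]
  have second_moment : 𝔼 t ∈ C, (f t - 0) ^ 2 = 𝔼 t ∈ C, f t :=
    expect_congr rfl fun t ht ↦ by rcases hf t ht with h | h <;> simp [h]
  linear_combination second_moment - expect_sub_const_sq hC f 0

theorem populationVariance_powersetCard_expect (hr₀ : r ≠ 0) (hr : r ≤ #C) (hC : 1 < #C)
    (f : α → 𝕜) :
    populationVariance (C.powersetCard r) (fun s ↦ 𝔼 t ∈ s, f t) =
      (#C - r) / (#C - 1) * populationVariance C f / r := by
  have centred : 𝔼 t ∈ C, (f t - 𝔼 u ∈ C, f u) = 0 := by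
    rw [expect_sub_distrib, expect_const (card_pos.1 (zero_lt_one.trans hC)), sub_self]
  rw [populationVariance, populationVariance, expect_powersetCard_expect hr₀ hr,
    ← expect_powersetCard_sq_expect_of_expect_eq_zero hr₀ hr hC centred]
  refine expect_congr rfl fun s hs ↦ ?_
  have hs_nonempty : s.Nonempty :=
    card_pos.1 ((mem_powersetCard.1 hs).2 ▸ Nat.pos_of_ne_zero hr₀)
  rw [expect_sub_distrib, expect_const hs_nonempty]

end SamplingWithoutReplacement

section Clusters

variable {M N : ℕ} (cl : Fin M → Fin N)

theorem clusterAccuracy_eq_expect (f : Fin M → ℝ) (i : Fin N) :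
    clusterAccuracy cl f i = 𝔼 t ∈ cluster cl i, f t :=
  (expect_eq_sum_div_card _ _).symm

theorem sum_Msize : ∑ i, (Msize cl i : ℝ) = M := by
  have hcard : ∑ i, Msize cl i = M := by
    simpa [Msize, cluster] using
      (card_eq_sum_card_fiberwise (f := cl) (s := univ) (t := univ) (by simp)).symm
  exact_mod_cast hcard

theorem sum_Msize_mul_clusterAccuracy (f : Fin M → ℝ) :
    ∑ i, Msize cl i * clusterAccuracy cl f i = ∑ t, f t := by
  rw [← sum_fiberwise univ cl f]
  refine sum_congr rfl fun i _ ↦ ?_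
  rw [clusterAccuracy_eq_expect, Msize, ← nsmul_eq_mul, card_smul_expect, cluster]

theorem secondStage_nonempty (m : ℕ) (i : Fin N) : (secondStage cl m i).Nonempty :=
  powersetCard_nonempty.2 (min_le_left _ _)

variable {cl} {m : ℕ} {i : Fin N}

theorem expect_secondStage_expect (hm : m ≠ 0) (hi : Msize cl i ≠ 0) (f : Fin M → ℝ) :
    𝔼 s ∈ secondStage cl m i, 𝔼 t ∈ s, f t = clusterAccuracy cl f i := by
  have hmin : min (Msize cl i) m ≠ 0 := by omega
  rw [clusterAccuracy_eq_expect, secondStage, expect_powersetCard_expect hmin (min_le_left _ _)]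

theorem populationVariance_secondStage_expect (hm : m ≠ 0) (f : Fin M → ℝ) :
    populationVariance (secondStage cl m i) (fun s ↦ 𝔼 t ∈ s, f t) =
      if m < Msize cl i then
        (Msize cl i - m) / (Msize cl i - 1) * populationVariance (cluster cl i) f / m
      else 0 := by
  split_ifs with hlt
  · rw [secondStage, min_eq_right hlt.le]
    exact populationVariance_powersetCard_expect hm hlt.le (by unfold Msize at hlt; omega) f
  · rw [secondStage, min_eq_left (not_lt.1 hlt), Msize, powersetCard_self]
    simp [populationVariance]

end Clusters

section SingleDraw

variable {M N : ℕ}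

/-- Expectation of a statistic of a single draw of two-stage weighted cluster sampling: the cluster
index `i` has probability `Msize cl i / M`, and given `i` the sample is uniform on
`secondStage cl m i`. -/
noncomputable def drawExpect (m : ℕ) (cl : Fin M → Fin N) (h : Fin N → Finset (Fin M) → ℝ) : ℝ :=
  ∑ i, (Msize cl i / M : ℝ) * 𝔼 s ∈ secondStage cl m i, h i s

variable {m : ℕ} {cl : Fin M → Fin N}

theorem drawExpect_eq_sum (h : Fin N → Finset (Fin M) → ℝ) :
    drawExpect m cl h = ∑ i, ∑ s ∈ secondStage cl m i,
      (Msize cl i / M : ℝ) * (1 / #(secondStage cl m i)) * h i s := by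
  simp only [drawExpect, expect_eq_sum_div_card, ← mul_sum]
  exact sum_congr rfl fun i _ ↦ by ring

theorem drawExpect_const (hM : M ≠ 0) (c : ℝ) : drawExpect m cl (fun _ _ ↦ c) = c := by
  simp only [drawExpect, expect_const (secondStage_nonempty cl m _)]
  rw [← sum_mul, ← sum_div, sum_Msize, div_self (Nat.cast_ne_zero.2 hM), one_mul]

theorem drawExpect_sub (h h' : Fin N → Finset (Fin M) → ℝ) :
    drawExpect m cl (fun i s ↦ h i s - h' i s) = drawExpect m cl h - drawExpect m cl h' := by
  simp only [drawExpect, expect_sub_distrib, mul_sub, sum_sub_distrib]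

theorem drawExpect_expect (hm : m ≠ 0) (hcl : ∀ i, Msize cl i ≠ 0) (f : Fin M → ℝ) :
    drawExpect m cl (fun _ s ↦ 𝔼 t ∈ s, f t) = 1 / M * ∑ t, f t := by
  simp only [drawExpect, expect_secondStage_expect hm (hcl _)]
  rw [← sum_Msize_mul_clusterAccuracy cl f, mul_sum]
  exact sum_congr rfl fun i _ ↦ by ring

theorem drawExpect_sq_expect_sub_const (hm : m ≠ 0) (hcl : ∀ i, Msize cl i ≠ 0) (f : Fin M → ℝ)
    (c : ℝ) :
    drawExpect m cl (fun _ s ↦ (𝔼 t ∈ s, f t - c) ^ 2) =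
      1 / M * (∑ i, Msize cl i * (clusterAccuracy cl f i - c) ^ 2 +
        1 / m * ∑ i with m < Msize cl i, (Msize cl i - m) / (Msize cl i - 1) * Msize cl i *
          populationVariance (cluster cl i) f) := by
  simp only [drawExpect, expect_sub_const_sq (secondStage_nonempty cl m _),
    expect_secondStage_expect hm (hcl _), populationVariance_secondStage_expect hm]
  rw [sum_filter, mul_sum, ← sum_add_distrib, mul_sum]
  refine sum_congr rfl fun i _ ↦ ?_
  split_ifs <;> ring

end SingleDraw

section IndependentDraws

variable {M N n m : ℕ} {cl : Fin M → Fin N}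

theorem twcsExpect_const_mul (c : ℝ)
    (g : (Fin n → Fin N) → ((k : Fin n) → k ∈ univ → Finset (Fin M)) → ℝ) :
    twcsExpect n m cl (fun I S ↦ c * g I S) = c * twcsExpect n m cl g := by
  simp only [twcsExpect, mul_sum, mul_left_comm _ c]

theorem twcsExpect_sum {ι : Type*} (T : Finset ι)
    (g : ι → (Fin n → Fin N) → ((k : Fin n) → k ∈ univ → Finset (Fin M)) → ℝ) :
    twcsExpect n m cl (fun I S ↦ ∑ j ∈ T, g j I S) = ∑ j ∈ T, twcsExpect n m cl (g j) := by
  simp only [twcsExpect, mul_sum]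
  rw [sum_comm (s := T)]
  exact sum_congr rfl fun I _ ↦ sum_comm

theorem twcsExpect_prod (h : Fin n → Fin N → Finset (Fin M) → ℝ) :
    twcsExpect n m cl (fun I S ↦ ∏ k, h k (I k) (S k (mem_univ k))) =
      ∏ k, drawExpect m cl (h k) := by
  simp only [twcsExpect, drawExpect_eq_sum]
  rw [prod_univ_sum, Fintype.piFinset_univ]
  refine sum_congr rfl fun I _ ↦ ?_
  rw [prod_sum]
  refine sum_congr rfl fun S _ ↦ ?_
  rw [← prod_mul_distrib, ← prod_attach univ]

theorem twcsExpect_draw (hM : M ≠ 0) (h : Fin N → Finset (Fin M) → ℝ) (k : Fin n) :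
    twcsExpect n m cl (fun I S ↦ h (I k) (S k (mem_univ k))) = drawExpect m cl h := by
  have hprod := twcsExpect_prod (m := m) (cl := cl)
    (fun j i s ↦ if j = k then h i s else 1)
  simp only [prod_ite_eq', mem_univ, if_true] at hprod
  rw [hprod, prod_eq_single k (fun j _ hj ↦ by simp only [hj, if_false, drawExpect_const hM])
    (by simp)]
  simp only [if_true]

theorem twcsExpect_draw_mul_draw (hM : M ≠ 0) (h h' : Fin N → Finset (Fin M) → ℝ) {k l : Fin n}
    (hkl : k ≠ l) :
    twcsExpect n m cl
        (fun I S ↦ h (I k) (S k (mem_univ k)) * h' (I l) (S l (mem_univ l))) =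
      drawExpect m cl h * drawExpect m cl h' := by
  have hprod := twcsExpect_prod (m := m) (cl := cl)
    (fun j i s ↦ (if j = k then h i s else 1) * (if j = l then h' i s else 1))
  simp only [prod_mul_distrib, prod_ite_eq', mem_univ, if_true] at hprod
  rw [hprod, prod_eq_mul k l hkl
    (fun j _ hj ↦ by simp only [hj.1, hj.2, if_false, mul_one, drawExpect_const hM])
    (by simp) (by simp)]
  simp only [hkl, hkl.symm, if_true, if_false, mul_one, one_mul]

theorem twcsExpect_sq_sum_of_drawExpect_eq_zero (hM : M ≠ 0) {h : Fin N → Finset (Fin M) → ℝ}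
    (hh : drawExpect m cl h = 0) :
    twcsExpect n m cl (fun I S ↦ (∑ k, h (I k) (S k (mem_univ k))) ^ 2) =
      n * drawExpect m cl (fun i s ↦ h i s ^ 2) := by
  simp only [sq, sum_mul_sum, twcsExpect_sum]
  have row : ∀ k : Fin n, ∑ l, twcsExpect n m cl
      (fun I S ↦ h (I k) (S k (mem_univ k)) * h (I l) (S l (mem_univ l))) =
        drawExpect m cl (fun i s ↦ h i s * h i s) := by
    intro k
    rw [sum_eq_single k
      (fun l _ hl ↦ by rw [twcsExpect_draw_mul_draw hM h h hl.symm, hh, zero_mul]) (by simp)]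
    exact twcsExpect_draw hM (fun i s ↦ h i s * h i s) k
  simp only [row, sum_const, card_univ, Fintype.card_fin, nsmul_eq_mul]

theorem twcsEstimator_eq_sum_expect (f : Fin M → ℝ) (I : Fin n → Fin N)
    (S : (k : Fin n) → k ∈ univ → Finset (Fin M)) :
    twcsEstimator n f I S = 1 / n * ∑ k, 𝔼 t ∈ S k (mem_univ k), f t := by
  simp only [twcsEstimator, expect_eq_sum_div_card]

theorem twcsExpect_twcsEstimator (hM : M ≠ 0) (hn : n ≠ 0) (f : Fin M → ℝ) :
    twcsExpect n m cl (twcsEstimator n f) = drawExpect m cl (fun _ s ↦ 𝔼 t ∈ s, f t) := by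
  have hn' : (n : ℝ) ≠ 0 := Nat.cast_ne_zero.2 hn
  calc twcsExpect n m cl (twcsEstimator n f)
      = 1 / n * ∑ k : Fin n, twcsExpect n m cl (fun _ S ↦ 𝔼 t ∈ S k (mem_univ k), f t) := by
        rw [funext₂ (twcsEstimator_eq_sum_expect f), twcsExpect_const_mul, twcsExpect_sum]
    _ = 1 / n * ∑ _k : Fin n, drawExpect m cl (fun _ s ↦ 𝔼 t ∈ s, f t) := by
        simp only [twcsExpect_draw hM (fun _ s ↦ 𝔼 t ∈ s, f t)]
    _ = drawExpect m cl (fun _ s ↦ 𝔼 t ∈ s, f t) := by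
        simp [hn']

theorem twcsExpect_sq_twcsEstimator_sub (hM : M ≠ 0) (hn : n ≠ 0) (f : Fin M → ℝ) {c : ℝ}
    (hc : drawExpect m cl (fun _ s ↦ 𝔼 t ∈ s, f t) = c) :
    twcsExpect n m cl (fun I S ↦ (twcsEstimator n f I S - c) ^ 2) =
      1 / n * drawExpect m cl (fun _ s ↦ (𝔼 t ∈ s, f t - c) ^ 2) := by
  have hn' : (n : ℝ) ≠ 0 := Nat.cast_ne_zero.2 hn
  have centred : drawExpect m cl (fun _ s ↦ 𝔼 t ∈ s, f t - c) = 0 := by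
    rw [drawExpect_sub, drawExpect_const hM, hc, sub_self]
  have sq_eq : ∀ (I : Fin n → Fin N) (S : (k : Fin n) → k ∈ univ → Finset (Fin M)),
      (twcsEstimator n f I S - c) ^ 2 =
        1 / n ^ 2 * (∑ k, (𝔼 t ∈ S k (mem_univ k), f t - c)) ^ 2 := by
    intro I S
    rw [twcsEstimator_eq_sum_expect, sum_sub_distrib, sum_const, card_univ, Fintype.card_fin,
      nsmul_eq_mul]
    field_simp
  simp only [sq_eq]
  rw [twcsExpect_const_mul, twcsExpect_sq_sum_of_drawExpect_eq_zero hM centred]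
  field_simp

end IndependentDraws

theorem twcs_estimator_variance_general (M N n m : ℕ) (hM : 1 ≤ M) (hn : 1 ≤ n) (hm : 1 ≤ m)
    (cl : Fin M → Fin N) (hcl : ∀ i, 1 ≤ Msize cl i) (f : Fin M → ℝ) :
    twcsExpect n m cl (fun I S ↦
        (twcsEstimator n f I S - twcsExpect n m cl (twcsEstimator n f)) ^ 2) =
      1 / (n * M) * (∑ i, Msize cl i * (clusterAccuracy cl f i - 1 / M * ∑ t, f t) ^ 2 +
        1 / m * ∑ i with m < Msize cl i, (Msize cl i - m) / (Msize cl i - 1) * Msize cl i *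
          populationVariance (cluster cl i) f) := by
  have hM' : M ≠ 0 := Nat.one_le_iff_ne_zero.1 hM
  have hn' : n ≠ 0 := Nat.one_le_iff_ne_zero.1 hn
  have hm' : m ≠ 0 := Nat.one_le_iff_ne_zero.1 hm
  have hcl' : ∀ i, Msize cl i ≠ 0 := fun i ↦ Nat.one_le_iff_ne_zero.1 (hcl i)
  rw [twcsExpect_twcsEstimator hM' hn', drawExpect_expect hm' hcl',
    twcsExpect_sq_twcsEstimator_sub hM' hn' f (drawExpect_expect hm' hcl' f),
    drawExpect_sq_expect_sub_const hm' hcl', ← mul_assoc, one_div_mul_one_div]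

/-- **Variance of the two-stage weighted cluster sampling estimator.**
A knowledge graph consists of `M ≥ 1` triples partitioned into `N` nonempty entity
clusters by `cl`; each triple `t` carries a correctness label `f t ∈ {0,1}`,
`μ i = τ i / M i` is the accuracy of cluster `i`, and `μ(G) = (1/M) ∑ t f t`.  Under
two-stage weighted cluster sampling with `n ≥ 1` first-stage draws and second-stage
sample size `m ≥ 1`, the variance `E[(μ̂_{w,m} - E[μ̂_{w,m}])²]` of the estimator
`μ̂_{w,m} = (1/n) ∑ k μ̂_{I k}` equals
`(1/(nM)) (∑ i M i (μ i - μ(G))² + (1/m) ∑_{i : M i > m} ((M i - m)/(M i - 1)) M i μ i (1 - μ i))`. -/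
theorem twcs_estimator_variance (M N n m : ℕ) (hM : 1 ≤ M) (hn : 1 ≤ n) (hm : 1 ≤ m)
    (cl : Fin M → Fin N) (hcl : ∀ i, 1 ≤ Msize cl i)
    (f : Fin M → ℝ) (hf : ∀ t, f t = 0 ∨ f t = 1) :
    twcsExpect n m cl (fun I S =>
        (twcsEstimator n f I S - twcsExpect n m cl (twcsEstimator n f)) ^ 2)
      = (1 / ((n : ℝ) * (M : ℝ))) *
          ((∑ i : Fin N, (Msize cl i : ℝ) *
              (clusterAccuracy cl f i - (1 / (M : ℝ)) * ∑ t, f t) ^ 2)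
            + (1 / (m : ℝ)) *
              ∑ i ∈ Finset.univ.filter (fun i : Fin N => m < Msize cl i),
                (((Msize cl i : ℝ) - (m : ℝ)) / ((Msize cl i : ℝ) - 1)) *
                  (Msize cl i : ℝ) *
                  (clusterAccuracy cl f i * (1 - clusterAccuracy cl f i))) := by
  simp only [twcs_estimator_variance_general M N n m hM hn hm cl hcl f,
    populationVariance_of_eq_zero_or_one fun t _ ↦ hf t, clusterAccuracy_eq_expect]
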